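/- Let φ: ℕ → ℝ⁺ be non-decreasing and suppose log b = liminf_{n→∞} (log log φ(n))/n satisfies 1 < b ≤ ∞ (so that liminf (log φ(n))/n = ∞). Then the Hausdorff dimension of E'(φ) = {x ∈ [0,1) : ∃ 1 ≤ k < n with a'_k(x) ≥ φ(n) and a'_n(x) ≥ φ(n) for infinitely many n} is at most 1/(b+1) (interpreted as 0 when b = ∞). -/

import Mathlib

open Filter MeasureTheory Set

/-- The Gauss map `T(x) = {1/x}` (with `T(0) = 0`). -/
noncomputable def gaussMap (x : ℝ) : ℝ := Int.fract x⁻¹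

/-- `cfA x n` is the `n`-th partial quotient `aₙ(x)` of the continued fraction
expansion of `x` (for `n ≥ 1`): `aₙ(x) = ⌊1 / T^{n-1}(x)⌋`. -/
noncomputable def cfA (x : ℝ) (n : ℕ) : ℕ := ⌊(gaussMap^[n - 1] x)⁻¹⌋₊

/-- `cfA' x n = aₙ'(x)`: equal to `aₙ(x)` if `aₙ(x)` is prime, and `0` otherwise. -/
noncomputable def cfA' (x : ℝ) (n : ℕ) : ℕ := if (cfA x n).Prime then cfA x n else 0

/-- The set `E'(φ)` of `x ∈ [0,1)` having, for infinitely many `n`, two distinct indices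
`1 ≤ k ≠ l ≤ n` with prime partial quotients `aₖ'(x), aₗ'(x) ≥ φ(n)`. -/
noncomputable def Eset (φ : ℕ → ℝ) : Set ℝ :=
  {x | x ∈ Set.Ico (0 : ℝ) 1 ∧
    {n : ℕ | ∃ k l : ℕ, 1 ≤ k ∧ k ≤ n ∧ 1 ≤ l ∧ l ≤ n ∧ k ≠ l ∧
      φ n ≤ (cfA' x k : ℝ) ∧ φ n ≤ (cfA' x l : ℝ)}.Infinite}

/-!
For every `λ < b`, a point with `aₙ(x) ≥ φ(n)` infinitely often has `aₙ(x) ≥ exp (λ ^ n)` infinitely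
often. If `1 < μ < λ`, such doubly exponential growth forces, for every constant `B`, infinitely
many `m` with `aₘ₊₁ ≥ B ^ m (a₁ ⋯ aₘ) ^ (μ - 1)`. The points of the cylinder of `a₁, …, aₘ`
satisfying this inequality form a set of diameter at most `∏ B⁻¹ aⱼ ^ (-(μ + 1))`, which is
multiplicative in the digits. The sum over all digit strings of the `s`-th powers of these diameters
is therefore at most a geometric series of ratio `B ^ (-s) ∑ k ^ (-(μ + 1) s)`, convergent for
large `B` as soon as `s > 1 / (μ + 1)`.
-/

open scoped ENNReal NNReal Topology

theorem dimH_limsup_cofinite_le_of_tsum_ediam_ne_top {X ι : Type*} [EMetricSpace X] [Countable ι]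
    {s : ℝ≥0} (hs : 0 < s) {U : ι → Set X} (hU : ∑' i, Metric.ediam (U i) ^ (s : ℝ) ≠ ∞) :
    dimH (limsup U cofinite) ≤ s := by
  borelize X
  have hs' : (0 : ℝ) < s := by exact_mod_cast hs
  have htail := ENNReal.tendsto_tsum_compl_atTop_zero hU
  have hradius : Tendsto (fun S : Finset ι =>
      (∑' i : {i // i ∉ S}, Metric.ediam (U i) ^ (s : ℝ)) ^ (s : ℝ)⁻¹) atTop (𝓝 0) := by
    simpa [inv_pos.2 hs'] using htail.ennrpow_const (s : ℝ)⁻¹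
  have hmeasure := Measure.hausdorffMeasure_le_liminf_tsum (s : ℝ) (limsup U cofinite) _ hradius
    (fun S (i : {i // i ∉ S}) => U i)
    (.of_forall fun S i => (ENNReal.le_rpow_inv_iff hs').2
      (ENNReal.le_tsum (f := fun i : {i // i ∉ S} => Metric.ediam (U i) ^ (s : ℝ)) i))
    (.of_forall fun S x hx => by
      rw [cofinite.limsup_set_eq] at hx
      obtain ⟨i, hxi, hiS⟩ := hx.exists_notMem_finset S
      exact mem_iUnion.2 ⟨⟨i, hiS⟩, hxi⟩)
  rw [htail.liminf_eq] at hmeasure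
  exact dimH_le_of_hausdorffMeasure_ne_top (ne_top_of_le_ne_top ENNReal.zero_ne_top hmeasure)

theorem tsum_pi_prod_eq_prod_tsum {m : ℕ} {α : Fin m → Type*} (g : ∀ i, α i → ℝ≥0∞) :
    ∑' a : ∀ i, α i, ∏ i, g i (a i) = ∏ i, ∑' k, g i k := by
  induction m with
  | zero => simp
  | succ m ih =>
    rw [← (Fin.consEquiv α).tsum_eq, ENNReal.tsum_prod']
    simp only [Fin.consEquiv_apply, Fin.prod_univ_succ, Fin.cons_zero, Fin.cons_succ,
      ENNReal.tsum_mul_left, ih, ENNReal.tsum_mul_right]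

theorem exists_tsum_inv_mul_rpow_lt_one {p s : ℝ} (hs : 0 < s) (hps : 1 < p * s) :
    ∃ B : ℝ≥0, 1 ≤ B ∧ ∑' k : ℕ, (((B * (k : ℝ≥0) ^ p)⁻¹ ^ s : ℝ≥0) : ℝ≥0∞) < 1 := by
  have hsummable : Summable fun k : ℕ => ((k : ℝ≥0) ^ (p * s))⁻¹ := NNReal.summable_rpow_inv.2 hps
  set Z := ∑' k : ℕ, ((k : ℝ≥0) ^ (p * s))⁻¹
  refine ⟨(Z + 1) ^ s⁻¹, NNReal.one_le_rpow (by simp) (inv_pos.2 hs).le, ?_⟩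
  have hterm (k : ℕ) : (((Z + 1) ^ s⁻¹ * (k : ℝ≥0) ^ p)⁻¹ ^ s : ℝ≥0) =
      (Z + 1)⁻¹ * ((k : ℝ≥0) ^ (p * s))⁻¹ := by
    rw [NNReal.inv_rpow, NNReal.mul_rpow, NNReal.rpow_inv_rpow hs.ne', NNReal.rpow_mul, mul_inv]
  simp only [hterm]
  rw [← ENNReal.coe_tsum (hsummable.mul_left _), NNReal.tsum_mul_left, ← ENNReal.coe_one,
    ENNReal.coe_lt_coe, inv_mul_lt_iff₀ (by positivity), mul_one]
  exact lt_add_one Z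

theorem le_one_div_add_one_of_forall_nnreal_lt {a b d : ℝ≥0∞} (hab : a < b)
    (h : ∀ r : ℝ≥0, a < r → r < b → d ≤ 1 / (r + 1)) : d ≤ 1 / (b + 1) := by
  have := nhdsLT_neBot_of_exists_lt ⟨a, hab⟩
  have hcont : Continuous fun r : ℝ≥0∞ => 1 / (r + 1) := by
    simp only [one_div]
    fun_prop
  refine ge_of_tendsto (hcont.continuousWithinAt (s := Iio b)) ?_
  filter_upwards [Ioo_mem_nhdsLT hab] with r hr
  lift r to ℝ≥0 using hr.2.ne_top
  exact h r hr.1 hr.2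

theorem frequently_mul_le_succ_of_frequently_pow_le {u : ℕ → ℝ} {μ lam : ℝ} (hμ : 0 < μ)
    (hlam : μ < lam) (hu : ∃ᶠ n in atTop, lam ^ n ≤ u n) :
    ∃ᶠ n in atTop, μ * u n ≤ u (n + 1) := by
  by_contra hcon
  obtain ⟨N, hN⟩ := eventually_atTop.1 (not_frequently.1 hcon)
  have hgeom (n : ℕ) : u (N + n) ≤ μ ^ n * u N :=
    le_geom (u := fun n => u (N + n)) hμ.le n fun k _ => (not_le.1 (hN (N + k) (by omega))).le
  have hratio : Tendsto (fun n : ℕ => (lam / μ) ^ n) atTop atTop :=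
    tendsto_pow_atTop_atTop_of_one_lt ((one_lt_div hμ).2 hlam)
  obtain ⟨n, hun, hNn, hlarge⟩ := (hu.and_eventually
    ((eventually_ge_atTop N).and (hratio.eventually_gt_atTop (u N / μ ^ N)))).exists
  obtain ⟨k, rfl⟩ := Nat.exists_eq_add_of_le hNn
  refine lt_irrefl (u (N + k)) ?_
  calc
    u (N + k) ≤ μ ^ k * u N := hgeom k
    _ = μ ^ (N + k) * (u N / μ ^ N) := by
      field_simp
      ring
    _ < μ ^ (N + k) * (lam / μ) ^ (N + k) := by gcongr
    _ = lam ^ (N + k) := by rw [← mul_pow, mul_div_cancel₀ _ hμ.ne']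
    _ ≤ u (N + k) := hun

theorem frequently_sum_le_of_frequently_pow_le {v : ℕ → ℝ} (hv : ∀ n, 0 ≤ v n) {μ lam K : ℝ}
    (hμ : 1 < μ) (hlam : μ < lam) (hK : 0 ≤ K) (hpow : ∃ᶠ n in atTop, lam ^ (n + 1) ≤ v n) :
    ∃ᶠ m in atTop, ∑ j ∈ Finset.range m, (K + (μ - 1) * v j) ≤ v m := by
  have hμ' : 0 < μ - 1 := sub_pos.2 hμ
  set S : ℕ → ℝ := fun n => ∑ j ∈ Finset.range n, v j
  have hS (n : ℕ) : S (n + 1) = S n + v n := Finset.sum_range_succ _ n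
  have hS0 (n : ℕ) : 0 ≤ S n := Finset.sum_nonneg fun j _ => hv j
  -- `α` and `β` are chosen so that `u n = S n + (α * n + β)` turns the desired inequality into the
  -- homogeneous `μ * u m ≤ u (m + 1)`.
  obtain ⟨α, hα0, hα⟩ : ∃ α, 0 ≤ α ∧ K = α * (μ - 1) :=
    ⟨K / (μ - 1), div_nonneg hK hμ'.le, (div_mul_cancel₀ _ hμ'.ne').symm⟩
  obtain ⟨β, hβ0, hβ⟩ : ∃ β, 0 ≤ β ∧ α = β * (μ - 1) :=
    ⟨α / (μ - 1), div_nonneg hα0 hμ'.le, (div_mul_cancel₀ _ hμ'.ne').symm⟩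
  have hgrowth : ∃ᶠ n in atTop, lam ^ n ≤ S n + (α * n + β) := by
    refine (tendsto_add_atTop_nat 1).frequently (hpow.mono fun n hn => ?_)
    have : 0 ≤ α * (n + 1 : ℕ) := by positivity
    linarith [hS n, hS0 n]
  refine (frequently_mul_le_succ_of_frequently_pow_le (by linarith) hlam hgrowth).mono
    fun m hm => ?_
  rw [Finset.sum_add_distrib, ← Finset.mul_sum, Finset.sum_const, Finset.card_range,
    nsmul_eq_mul, hα]
  rw [hS] at hm
  push_cast at hm
  linarith

theorem frequently_prod_rpow_le_of_frequently_exp_pow_le {a : ℕ → ℝ} (ha : ∀ n, 1 ≤ a n)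
    {μ lam B : ℝ} (hμ : 1 < μ) (hlam : μ < lam) (hB : 1 ≤ B)
    (hexp : ∃ᶠ n in atTop, Real.exp (lam ^ (n + 1)) ≤ a n) :
    ∃ᶠ m in atTop, ∏ j ∈ Finset.range m, B * a j ^ (μ - 1) ≤ a m := by
  have ha0 (n : ℕ) : 0 < a n := one_pos.trans_le (ha n)
  have hB0 : 0 < B := one_pos.trans_le hB
  have hfactor (n : ℕ) : Real.exp (Real.log B + (μ - 1) * Real.log (a n)) = B * a n ^ (μ - 1) := by
    rw [Real.exp_add, Real.exp_log hB0, Real.rpow_def_of_pos (ha0 n), mul_comm (μ - 1)]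
  refine (frequently_sum_le_of_frequently_pow_le (fun n => Real.log_nonneg (ha n)) hμ hlam
    (Real.log_nonneg hB) (hexp.mono fun n => (Real.le_log_iff_exp_le (ha0 n)).2)).mono
      fun m hm => ?_
  simpa only [Real.le_log_iff_exp_le (ha0 m), Real.exp_sum, hfactor] using hm

theorem eventually_exp_pow_le_of_log_lt_liminf {φ : ℕ → ℝ} {c : ℝ} (hc : 0 < c)
    (hφ : ∀ n, c ≤ φ n) {lam : ℝ} (hlam : 1 < lam)
    (hliminf : (Real.log lam : EReal) <
      liminf (fun n : ℕ => ((Real.log (Real.log (φ n)) / (n : ℝ) : ℝ) : EReal)) atTop) :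
    ∀ᶠ n in atTop, Real.exp (lam ^ n) ≤ φ n := by
  have hpow : Tendsto (fun n : ℕ => lam ^ n) atTop atTop := tendsto_pow_atTop_atTop_of_one_lt hlam
  filter_upwards [eventually_lt_of_lt_liminf hliminf, eventually_gt_atTop 0,
    hpow.eventually_gt_atTop (-Real.log c)] with n hn hn0 hlarge
  have hn0' : (0 : ℝ) < n := by exact_mod_cast hn0
  rw [EReal.coe_lt_coe_iff, lt_div_iff₀ hn0', mul_comm, ← Real.log_pow] at hn
  have hlog_ne : Real.log (φ n) ≠ 0 := fun h => by
    rw [h, Real.log_zero] at hn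
    exact hn.not_ge (Real.log_nonneg (one_le_pow₀ hlam.le))
  -- `Real.log` is even, so `hn` alone does not exclude a very negative `Real.log (φ n)`.
  have habs : lam ^ n < |Real.log (φ n)| := by
    rwa [← Real.log_abs (Real.log (φ n)),
      Real.log_lt_log_iff (by positivity) (abs_pos.2 hlog_ne)] at hn
  have hlower : Real.log c ≤ Real.log (φ n) := Real.log_le_log hc (hφ n)
  rw [← Real.le_log_iff_exp_le (hc.trans_le (hφ n))]
  exact ((lt_abs.1 habs).resolve_right (by linarith)).le

theorem cfA'_le_cfA (x : ℝ) (n : ℕ) : cfA' x n ≤ cfA x n := by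
  unfold cfA'
  split_ifs
  exacts [le_rfl, Nat.zero_le _]

/-- The point `x` lies in `(0, 1)` and its continued fraction expansion does not terminate, that is,
`x ∈ (0, 1)` is irrational. It is stated through the Gauss orbit, which on the rationals eventually
reaches the fixed point `0`, where the digits take the junk value `0`. -/
def HasInfiniteCF (x : ℝ) : Prop := ∀ n, gaussMap^[n] x ∈ Ioo (0 : ℝ) 1

theorem iterate_gaussMap_mem_Ico {x : ℝ} (hx : x ∈ Ico (0 : ℝ) 1) :
    ∀ n, gaussMap^[n] x ∈ Ico (0 : ℝ) 1
  | 0 => hx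
  | n + 1 => by
    rw [Function.iterate_succ_apply']
    exact ⟨Int.fract_nonneg _, Int.fract_lt_one _⟩

theorem hasInfiniteCF_of_frequently_cfA_ne_zero {x : ℝ} (hx : x ∈ Ico (0 : ℝ) 1)
    (h : ∃ᶠ n in atTop, cfA x n ≠ 0) : HasInfiniteCF x := by
  refine fun n => ⟨(iterate_gaussMap_mem_Ico hx n).1.lt_of_ne' fun hn => ?_,
    (iterate_gaussMap_mem_Ico hx n).2⟩
  obtain ⟨k, hk, hnk⟩ := (h.and_eventually (eventually_gt_atTop n)).exists
  have hsplit : k - 1 = (k - 1 - n) + n := by omega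
  have hzero : gaussMap^[k - 1] x = 0 := by
    rw [hsplit, Function.iterate_add_apply, hn]
    exact Function.iterate_fixed (by simp [gaussMap]) _
  exact hk (by simp [cfA, hzero])

namespace HasInfiniteCF

variable {x y : ℝ}

theorem cfA_ne_zero (hx : HasInfiniteCF x) (n : ℕ) : cfA x (n + 1) ≠ 0 :=
  (Nat.floor_pos.2 ((one_le_inv₀ (hx n).1).2 (hx n).2.le)).ne'

theorem inv_iterate_gaussMap (hx : HasInfiniteCF x) (n : ℕ) :
    (gaussMap^[n] x)⁻¹ = cfA x (n + 1) + gaussMap^[n + 1] x := by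
  rw [Function.iterate_succ_apply', cfA, Nat.add_sub_cancel, gaussMap,
    natCast_floor_eq_intCast_floor (inv_nonneg.2 (hx n).1.le), Int.floor_add_fract]

theorem iterate_gaussMap_le_inv_cfA (hx : HasInfiniteCF x) (n : ℕ) :
    gaussMap^[n] x ≤ (cfA x (n + 1) : ℝ)⁻¹ := by
  rw [le_inv_comm₀ (hx n).1 (Nat.cast_pos.2 (hx.cfA_ne_zero n).bot_lt), hx.inv_iterate_gaussMap]
  exact le_add_of_nonneg_right (hx (n + 1)).1.le

theorem abs_iterate_sub_le_succ (hx : HasInfiniteCF x) (hy : HasInfiniteCF y) {n : ℕ}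
    (h : cfA x (n + 1) = cfA y (n + 1)) :
    |gaussMap^[n] x - gaussMap^[n] y| ≤
      ((cfA x (n + 1) : ℝ) ^ 2)⁻¹ * |gaussMap^[n + 1] x - gaussMap^[n + 1] y| := by
  have hx0 := (hx n).1
  have hy0 := (hy n).1
  have hidentity : gaussMap^[n] x - gaussMap^[n] y =
      -(gaussMap^[n] x * gaussMap^[n] y * (gaussMap^[n + 1] x - gaussMap^[n + 1] y)) := by
    have hsub : gaussMap^[n + 1] x - gaussMap^[n + 1] y =
        (gaussMap^[n] x)⁻¹ - (gaussMap^[n] y)⁻¹ := by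
      rw [hx.inv_iterate_gaussMap, hy.inv_iterate_gaussMap, h]
      ring
    rw [hsub]
    field_simp
    ring
  rw [hidentity, abs_neg, abs_mul, abs_of_pos (mul_pos hx0 hy0), sq, mul_inv]
  gcongr
  · exact hx.iterate_gaussMap_le_inv_cfA n
  · exact h ▸ hy.iterate_gaussMap_le_inv_cfA n

theorem abs_sub_le_iterate (hx : HasInfiniteCF x) (hy : HasInfiniteCF y) {m : ℕ}
    (h : ∀ j < m, cfA x (j + 1) = cfA y (j + 1)) :
    |x - y| ≤ ((∏ j ∈ Finset.range m, (cfA x (j + 1) : ℝ)) ^ 2)⁻¹ *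
      |gaussMap^[m] x - gaussMap^[m] y| := by
  induction m with
  | zero => simp
  | succ m ih =>
    refine (ih fun j hj => h j (hj.trans m.lt_succ_self)).trans ?_
    rw [Finset.prod_range_succ, mul_pow, mul_inv, mul_assoc]
    gcongr
    exact hx.abs_iterate_sub_le_succ hy (h m m.lt_succ_self)

theorem frequently_prod_rpow_le (hx : HasInfiniteCF x) {μ lam : ℝ} {B : ℝ≥0} (hμ : 1 < μ)
    (hlam : μ < lam) (hB : 1 ≤ B) (hexp : ∃ᶠ n in atTop, Real.exp (lam ^ n) ≤ cfA x n) :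
    ∃ᶠ m in atTop, ∏ j ∈ Finset.range m, B * (cfA x (j + 1) : ℝ≥0) ^ (μ - 1) ≤ cfA x (m + 1) := by
  rw [← map_add_atTop_eq_nat 1] at hexp
  refine (frequently_prod_rpow_le_of_frequently_exp_pow_le
    (fun n => Nat.one_le_cast.2 (hx.cfA_ne_zero n).bot_lt) hμ hlam
    (by exact_mod_cast hB) hexp).mono fun m hm => ?_
  rw [← NNReal.coe_le_coe]
  push_cast
  exact hm

end HasInfiniteCF

/-- The continued fraction cylinder, or fundamental set, of a digit string: the irrational points of
`(0, 1)` whose expansion begins with it. As `Fin m` starts at `0`, `a i` is the digit `aᵢ₊₁`. -/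
def cfCylinder {m : ℕ} (a : Fin m → ℕ) : Set ℝ :=
  {x | HasInfiniteCF x ∧ ∀ i : Fin m, cfA x (i + 1) = a i}

theorem ediam_cfCylinder_inter_le {m : ℕ} (a : Fin m → ℕ) {c : ℝ≥0} (hc : c ≠ 0) :
    Metric.ediam (cfCylinder a ∩ {x | c ≤ cfA x (m + 1)}) ≤
      (((∏ i, (a i : ℝ≥0)) ^ 2 * c)⁻¹ : ℝ≥0) := by
  have hc' : (0 : ℝ) < c := by exact_mod_cast hc.bot_lt
  have htail {z : ℝ} (hz : HasInfiniteCF z) (hcz : c ≤ cfA z (m + 1)) :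
      gaussMap^[m] z ≤ (c : ℝ)⁻¹ :=
    (hz.iterate_gaussMap_le_inv_cfA m).trans (inv_anti₀ hc' (by exact_mod_cast hcz))
  refine Metric.ediam_le ?_
  rintro x ⟨⟨hx, hxa⟩, hcx⟩ y ⟨⟨hy, hya⟩, hcy⟩
  have hdist : |gaussMap^[m] x - gaussMap^[m] y| ≤ (c : ℝ)⁻¹ :=
    abs_le.2 ⟨by linarith [(hx m).1, htail hy hcy], by linarith [(hy m).1, htail hx hcx]⟩
  have hprod : ∏ j ∈ Finset.range m, (cfA x (j + 1) : ℝ) = ∏ i, (a i : ℝ) := by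
    simp only [← Fin.prod_univ_eq_prod_range (fun j => (cfA x (j + 1) : ℝ)), hxa]
  have hxy := hx.abs_sub_le_iterate hy fun j hj => (hxa ⟨j, hj⟩).trans (hya ⟨j, hj⟩).symm
  rw [hprod] at hxy
  rw [edist_nndist, ENNReal.coe_le_coe, ← NNReal.coe_le_coe, coe_nndist, Real.dist_eq, mul_inv]
  push_cast
  exact hxy.trans (by gcongr)

theorem ediam_cfCylinder_inter_prod_le {m : ℕ} (a : Fin m → ℕ) {w : ℕ → ℝ≥0}
    (hw : ∀ k ≠ 0, w k ≠ 0) :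
    Metric.ediam (cfCylinder a ∩ {x | ∏ i, w (a i) ≤ cfA x (m + 1)}) ≤
      (∏ i, ((a i : ℝ≥0) ^ 2 * w (a i))⁻¹ : ℝ≥0) := by
  rcases (cfCylinder a).eq_empty_or_nonempty with hempty | ⟨x, hx, hxa⟩
  · simp [hempty]
  · have hprod : ∏ i, w (a i) ≠ 0 :=
      Finset.prod_ne_zero_iff.2 fun i _ => hw _ (hxa i ▸ hx.cfA_ne_zero i)
    refine (ediam_cfCylinder_inter_le a hprod).trans_eq ?_
    rw [Finset.prod_inv_distrib, Finset.prod_mul_distrib, Finset.prod_pow]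

theorem dimH_setOf_frequently_prod_le {w : ℕ → ℝ≥0} (hw : ∀ k ≠ 0, w k ≠ 0) {s : ℝ≥0} (hs : 0 < s)
    (hsum : ∑' k : ℕ, ((((k : ℝ≥0) ^ 2 * w k)⁻¹ ^ (s : ℝ) : ℝ≥0) : ℝ≥0∞) < 1) :
    dimH {x | HasInfiniteCF x ∧ ∃ᶠ m in atTop,
      ∏ j ∈ Finset.range m, w (cfA x (j + 1)) ≤ cfA x (m + 1)} ≤ s := by
  let U (p : Σ m : ℕ, Fin m → ℕ) : Set ℝ :=
    cfCylinder p.2 ∩ {x | ∏ i, w (p.2 i) ≤ cfA x (p.1 + 1)}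
  have hdiam (p : Σ m : ℕ, Fin m → ℕ) : Metric.ediam (U p) ^ (s : ℝ) ≤
      ∏ i, ((((p.2 i : ℝ≥0) ^ 2 * w (p.2 i))⁻¹ ^ (s : ℝ) : ℝ≥0) : ℝ≥0∞) := by
    rw [← ENNReal.ofNNReal_finsetProd, NNReal.finsetProd_rpow,
      ENNReal.coe_rpow_of_nonneg _ s.coe_nonneg]
    exact ENNReal.rpow_le_rpow (ediam_cfCylinder_inter_prod_le p.2 hw) s.coe_nonneg
  have hU : ∑' p, Metric.ediam (U p) ^ (s : ℝ) ≠ ∞ := by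
    refine ne_top_of_le_ne_top ?_ (ENNReal.tsum_le_tsum hdiam)
    simp only [ENNReal.tsum_sigma', tsum_pi_prod_eq_prod_tsum
      fun _ (k : ℕ) => ((((k : ℝ≥0) ^ 2 * w k)⁻¹ ^ (s : ℝ) : ℝ≥0) : ℝ≥0∞),
      Finset.prod_const, Finset.card_univ, Fintype.card_fin, ENNReal.tsum_geometric]
    exact ENNReal.inv_ne_top.2 (tsub_pos_of_lt hsum).ne'
  refine (dimH_mono ?_).trans (dimH_limsup_cofinite_le_of_tsum_ediam_ne_top hs hU)
  rintro x ⟨hx, hfreq⟩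
  rw [cofinite.limsup_set_eq]
  let digits (m : ℕ) : Σ m : ℕ, Fin m → ℕ := ⟨m, fun i => cfA x (i + 1)⟩
  have hinj : Function.Injective digits := fun _ _ h => congrArg Sigma.fst h
  refine ((Nat.frequently_atTop_iff_infinite.1 hfreq).image hinj.injOn).mono ?_
  rintro - ⟨m, hm, rfl⟩
  refine ⟨⟨hx, fun _ => rfl⟩, ?_⟩
  rw [mem_ofPred_eq] at hm ⊢
  rwa [← Fin.prod_univ_eq_prod_range (fun j => w (cfA x (j + 1)))] at hm

theorem dimH_setOf_frequently_exp_pow_le {lam : ℝ≥0} (hlam : 1 < lam) :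
    dimH {x ∈ Ico (0 : ℝ) 1 | ∃ᶠ n in atTop, Real.exp ((lam : ℝ) ^ n) ≤ cfA x n} ≤
      1 / (lam + 1) := by
  refine le_one_div_add_one_of_forall_nnreal_lt (ENNReal.coe_lt_coe.2 hlam) fun r hr hrlam => ?_
  obtain ⟨μ, hrμ, hμlam⟩ := exists_between (ENNReal.coe_lt_coe.1 hrlam)
  have hμ : (1 : ℝ) < μ := by exact_mod_cast (ENNReal.coe_lt_coe.1 hr).trans hrμ
  have hps : 1 < ((μ : ℝ) + 1) * ((r + 1)⁻¹ : ℝ≥0) := by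
    push_cast
    rw [← div_eq_mul_inv, one_lt_div (by positivity)]
    gcongr
  obtain ⟨B, hB, hsum⟩ := exists_tsum_inv_mul_rpow_lt_one (by positivity) hps
  have hweight (k : ℕ) : (k : ℝ≥0) ^ 2 * (B * (k : ℝ≥0) ^ ((μ : ℝ) - 1)) =
      B * (k : ℝ≥0) ^ ((μ : ℝ) + 1) := by
    rw [mul_left_comm, ← NNReal.rpow_two, ← NNReal.rpow_add' (by linarith)]
    ring_nf
  have hdim := dimH_setOf_frequently_prod_le (w := fun k => B * (k : ℝ≥0) ^ ((μ : ℝ) - 1))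
    (s := (r + 1)⁻¹) (fun k hk => by positivity) (by positivity)
    (by simpa only [hweight] using hsum)
  refine (dimH_mono ?_).trans (hdim.trans_eq (by simp))
  rintro x ⟨hx, hexp⟩
  have hcf : HasInfiniteCF x := hasInfiniteCF_of_frequently_cfA_ne_zero hx <|
    hexp.mono fun n hn => by exact_mod_cast ((Real.exp_pos _).trans_le hn).ne'
  exact ⟨hcf, hcf.frequently_prod_rpow_le hμ (by exact_mod_cast hμlam) hB hexp⟩

theorem dimH_Eset_le_general {φ : ℕ → ℝ} {c : ℝ} (hc : 0 < c) (hφ : ∀ n, c ≤ φ n)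
    {b : ℝ≥0∞} (hb : 1 < b)
    (hliminf : ENNReal.log b ≤
      liminf (fun n : ℕ => ((Real.log (Real.log (φ n)) / (n : ℝ) : ℝ) : EReal)) atTop) :
    dimH {x ∈ Ico (0 : ℝ) 1 | ∃ᶠ n in atTop, φ n ≤ cfA x n} ≤ 1 / (b + 1) := by
  refine le_one_div_add_one_of_forall_nnreal_lt hb fun lam hlam hlamb => ?_
  replace hlam : 1 < lam := ENNReal.coe_lt_coe.1 hlam
  have hloglam : (Real.log lam : EReal) < ENNReal.log b := by
    rw [← ENNReal.log_ofReal_of_pos (by positivity), ENNReal.ofReal_coe_nnreal]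
    exact ENNReal.log_strictMono hlamb
  have hexp := eventually_exp_pow_le_of_log_lt_liminf hc hφ (by exact_mod_cast hlam)
    (hloglam.trans_le hliminf)
  refine (dimH_mono ?_).trans (dimH_setOf_frequently_exp_pow_le hlam)
  rintro x ⟨hx, hfreq⟩
  exact ⟨hx, (hfreq.and_eventually hexp).mono fun n hn => hn.2.trans hn.1⟩

/-- if `log b = liminf (log log φ(n))/n` with `1 < b ≤ ∞`, then the
Hausdorff dimension of `E'(φ)` (in the form with `k < n` and large prime partial
quotients at positions `k` and `n`) is at most `1/(b+1)` (which is `0` for `b = ∞`). -/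
theorem dimH_Eset_le (φ : ℕ → ℝ) (hpos : ∀ n, 0 < φ n) (hmono : Monotone φ)
    (b : ENNReal) (hb : 1 < b)
    (hliminf : Filter.liminf
        (fun n : ℕ => ((Real.log (Real.log (φ n)) / (n : ℝ) : ℝ) : EReal)) atTop
      = ENNReal.log b) :
    dimH {x | x ∈ Set.Ico (0 : ℝ) 1 ∧
        {n : ℕ | ∃ k : ℕ, 1 ≤ k ∧ k < n ∧
          φ n ≤ (cfA' x k : ℝ) ∧ φ n ≤ (cfA' x n : ℝ)}.Infinite}
      ≤ 1 / (b + 1) := by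
  refine (dimH_mono ?_).trans
    (dimH_Eset_le_general (hpos 0) (fun n => hmono n.zero_le) hb hliminf.ge)
  rintro x ⟨hx, hinf⟩
  refine ⟨hx, Nat.frequently_atTop_iff_infinite.2 (hinf.mono ?_)⟩
  rintro n ⟨-, -, -, -, hn⟩
  exact hn.trans (Nat.cast_le.2 (cfA'_le_cfA x n))
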